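/- arXiv:1605.09569 — 2 statements merged into one kernel-verified Lean document; each statement's English description precedes it below -/
import Mathlib

section
/- Let j ≥ 1 be an integer and R > 0. Let u be a complex-valued function which is continuous and bounded on the half-disk {x = (x₁,x₂) : |x| < R, x₁ ≥ 0}, vanishes at every point (0, x₂) with |x₂| < R, and whose restriction to {x : 0 < |x| < R, x₁ ≥ 0} extends to a twice continuously differentiable function with vanishing Laplacian on an open subset of ℝ² containing {x : 0 < |x| < R, x₁ ≥ 0}. Define ζ(r) = ∫_{−π/2}^{π/2} u(r cos t, r sin t) sin(j(π/2 − t)) dt for 0 < r < R. Then the function r ↦ r^{−j} ζ(r) is constant on (0, R); that is, ζ(r) = ζ(r') (r/r')^j for all 0 < r, r' < R. -/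
/-!
In logarithmic polar coordinates `x = exp s • (cos t, sin t)` the Laplacian is, up to the factor
`‖x‖²`, the constant-coefficient operator `∂ₛ² + ∂ₜ²`. Pairing a harmonic function with an
eigenfunction `φ'' = -c² φ` that vanishes with it at the ends of the angular interval therefore
turns the Laplace equation into `F'' = c² F`. Here `G ± c F`, with `G = F'`, are multiples of
`exp (± c s)`; boundedness of `F` as `s → -∞` forces `G - c F = 0`, so that `F` is a multiple of
`exp (c s)`, the power `r ^ c` of the radius.
-/

open Set Filter Topology MeasureTheory
open scoped Interval

section ExponentialODE

variable {E : Type*} [NormedAddCommGroup E] [NormedSpace ℝ E] {F G : ℝ → E} {c S s s' : ℝ}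

theorem eq_exp_smul_of_hasDerivAt_smul_self (hF : ∀ σ < S, HasDerivAt F (c • F σ) σ)
    (hs : s < S) (hs' : s' < S) : F s = Real.exp (c * (s - s')) • F s' := by
  have hexp (σ : ℝ) : HasDerivAt (fun σ => Real.exp (c * (s - σ)))
      (Real.exp (c * (s - σ)) * -c) σ :=
    (((hasDerivAt_id σ).const_sub s).const_mul c).exp.congr_deriv (by simp)
  have hconst : ∀ σ < S, HasDerivAt (fun σ => Real.exp (c * (s - σ)) • F σ) 0 σ := fun σ hσ =>
    ((hexp σ).smul (hF σ hσ)).congr_deriv (by module)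
  simpa using isOpen_Iio.is_const_of_deriv_eq_zero isPreconnected_Iio
    (fun σ hσ => (hconst σ hσ).differentiableAt.differentiableWithinAt)
    (fun σ hσ => (hconst σ hσ).deriv) hs hs'

theorem tendsto_exp_mul_atBot (hc : 0 < c) : Tendsto (fun σ => Real.exp (c * σ)) atBot (𝓝 0) :=
  Real.tendsto_exp_atBot.comp (tendsto_id.const_mul_atBot hc)

theorem tendsto_atBot_of_hasDerivAt_smul_self (hc : 0 < c)
    (hF : ∀ σ < S, HasDerivAt F (c • F σ) σ) : Tendsto F atBot (𝓝 0) := by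
  have hlim := (tendsto_exp_mul_atBot hc).smul_const (Real.exp (-(c * (S - 1))) • F (S - 1))
  rw [zero_smul] at hlim
  refine hlim.congr' ?_
  filter_upwards [eventually_lt_atBot S] with σ hσ
  rw [eq_exp_smul_of_hasDerivAt_smul_self hF hσ (sub_one_lt S), smul_smul, ← Real.exp_add]
  ring_nf

theorem eq_exp_smul_of_hasDerivAt_sq_smul_of_tendsto (hc : 0 < c)
    (hF : ∀ σ < S, HasDerivAt F (G σ) σ) (hG : ∀ σ < S, HasDerivAt G (c ^ 2 • F σ) σ)
    (hlim : Tendsto (fun σ => Real.exp (c * σ) • F σ) atBot (𝓝 0)) (hs : s < S) (hs' : s' < S) :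
    F s = Real.exp (c * (s - s')) • F s' := by
  have hgrow : ∀ σ < S, HasDerivAt (fun σ => G σ + c • F σ) (c • (G σ + c • F σ)) σ :=
    fun σ hσ => ((hG σ hσ).add ((hF σ hσ).const_smul c)).congr_deriv (by module)
  have hdecay : ∀ σ < S, HasDerivAt (fun σ => G σ - c • F σ) (-c • (G σ - c • F σ)) σ :=
    fun σ hσ => ((hG σ hσ).sub ((hF σ hσ).const_smul c)).congr_deriv (by module)
  have hdecay_lim : Tendsto (fun σ => Real.exp (c * σ) • (G σ - c • F σ)) atBot (𝓝 0) := by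
    have hlim' := ((tendsto_exp_mul_atBot hc).smul
      (tendsto_atBot_of_hasDerivAt_smul_self hc hgrow)).sub (hlim.const_smul (2 * c))
    simp only [smul_zero, sub_zero] at hlim'
    exact hlim'.congr fun σ => by module
  have hdecay_eq_zero : ∀ σ < S, G σ - c • F σ = 0 := by
    intro σ hσ
    have hconst : ∀ᶠ τ in atBot,
        Real.exp (c * σ) • (G σ - c • F σ) = Real.exp (c * τ) • (G τ - c • F τ) := by
      filter_upwards [eventually_lt_atBot S] with τ hτ
      rw [eq_exp_smul_of_hasDerivAt_smul_self hdecay hτ hσ, smul_smul, ← Real.exp_add]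
      ring_nf
    have hzero := tendsto_nhds_unique (tendsto_const_nhds.congr' hconst) hdecay_lim
    exact (smul_eq_zero.1 hzero).resolve_left (Real.exp_ne_zero _)
  exact eq_exp_smul_of_hasDerivAt_smul_self
    (fun σ hσ => sub_eq_zero.1 (hdecay_eq_zero σ hσ) ▸ hF σ hσ) hs hs'

end ExponentialODE

section IntervalIntegral

variable {E : Type*} [NormedAddCommGroup E] [NormedSpace ℝ E] {a b : ℝ}

theorem hasDerivAt_intervalIntegral_of_continuousOn {D : Set ℝ} (hD : IsOpen D) {f f' : ℝ → ℝ → E}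
    (hf : ∀ s ∈ D, ContinuousOn (f s) [[a, b]])
    (hf' : ContinuousOn (fun p : ℝ × ℝ => f' p.1 p.2) (D ×ˢ [[a, b]]))
    (hderiv : ∀ s ∈ D, ∀ t ∈ [[a, b]], HasDerivAt (fun σ => f σ t) (f' s t) s)
    {s : ℝ} (hs : s ∈ D) :
    HasDerivAt (fun σ => ∫ t in a..b, f σ t) (∫ t in a..b, f' s t) s := by
  obtain ⟨ε, hε, hεD⟩ := Metric.nhds_basis_closedBall.mem_iff.1 (hD.mem_nhds hs)
  obtain ⟨C, hC⟩ := ((isCompact_closedBall s ε).prod isCompact_uIcc).exists_bound_of_continuousOn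
    (hf'.mono (prod_mono_left hεD))
  have hmeas {g : ℝ → E} (hg : ContinuousOn g [[a, b]]) :
      AEStronglyMeasurable g (volume.restrict (uIoc a b)) :=
    (hg.mono uIoc_subset_uIcc).aestronglyMeasurable measurableSet_uIoc
  have hf's : ContinuousOn (f' s) [[a, b]] :=
    hf'.comp (f := fun t => (s, t)) (by fun_prop) fun t ht => ⟨hs, ht⟩
  exact (intervalIntegral.hasDerivAt_integral_of_dominated_loc_of_deriv_le
    (Metric.closedBall_mem_nhds s hε)
    (by filter_upwards [hD.mem_nhds hs] with σ hσ using hmeas (hf σ hσ))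
    (hf s hs).intervalIntegrable (hmeas hf's)
    (.of_forall fun t ht σ hσ => hC (σ, t) ⟨hσ, uIoc_subset_uIcc ht⟩) intervalIntegrable_const
    (.of_forall fun t ht σ hσ => hderiv σ (hεD hσ) t (uIoc_subset_uIcc ht))).2

theorem integral_smul_deriv_deriv_eq [CompleteSpace E] {φ φ' φ'' : ℝ → ℝ} {f f' f'' : ℝ → E}
    (hφ : ∀ t ∈ [[a, b]], HasDerivAt φ (φ' t) t) (hφ' : ∀ t ∈ [[a, b]], HasDerivAt φ' (φ'' t) t)
    (hφ'' : IntervalIntegrable φ'' volume a b)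
    (hf : ∀ t ∈ [[a, b]], HasDerivAt f (f' t) t) (hf' : ∀ t ∈ [[a, b]], HasDerivAt f' (f'' t) t)
    (hf'' : IntervalIntegrable f'' volume a b)
    (hφa : φ a = 0) (hφb : φ b = 0) (hfa : f a = 0) (hfb : f b = 0) :
    ∫ t in a..b, φ t • f'' t = ∫ t in a..b, φ'' t • f t := by
  have hφ'_int : IntervalIntegrable φ' volume a b :=
    (HasDerivAt.continuousOn hφ').intervalIntegrable
  have hf'_int : IntervalIntegrable f' volume a b :=
    (HasDerivAt.continuousOn hf').intervalIntegrable
  rw [intervalIntegral.integral_smul_deriv_eq_deriv_smul hφ hf' hφ'_int hf'',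
    intervalIntegral.integral_smul_deriv_eq_deriv_smul hφ' hf hφ'' hf'_int, hφa, hφb, hfa, hfb]
  simp

end IntervalIntegral

section DerivAlong

variable {V E : Type*} [NormedAddCommGroup V] [NormedSpace ℝ V] [NormedAddCommGroup E]
  [NormedSpace ℝ E] {f : V → E}

/-- The derivative of `f` along the linear vector field `x ↦ A x`. For `A = id` this is the Euler
operator, and for `A = rotationGenerator` it is the angular derivative. -/
noncomputable def derivAlong (A : V →L[ℝ] V) (f : V → E) (x : V) : E := fderiv ℝ f x (A x)

theorem hasDerivAt_comp_of_hasDerivAt_linear {A : V →L[ℝ] V} {γ : ℝ → V} {t : ℝ}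
    (hf : DifferentiableAt ℝ f (γ t)) (hγ : HasDerivAt γ (A (γ t)) t) :
    HasDerivAt (fun τ => f (γ τ)) (derivAlong A f (γ t)) t :=
  hf.hasFDerivAt.comp_hasDerivAt t hγ

theorem contDiffOn_derivAlong {U : Set V} (hU : IsOpen U) {m n : WithTop ℕ∞}
    (hf : ContDiffOn ℝ n f U) (hmn : m + 1 ≤ n) (A : V →L[ℝ] V) :
    ContDiffOn ℝ m (derivAlong A f) U :=
  (hf.fderiv_of_isOpen hU hmn).clm_apply A.contDiff.contDiffOn

theorem derivAlong_derivAlong {x : V} (hf : DifferentiableAt ℝ (fderiv ℝ f) x) (A : V →L[ℝ] V) :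
    derivAlong A (derivAlong A f) x
      = fderiv ℝ (fderiv ℝ f) x (A x) (A x) + fderiv ℝ f x (A (A x)) := by
  have hA : fderiv ℝ (derivAlong A f) x = _ := fderiv_clm_apply hf A.differentiableAt
  rw [derivAlong, hA, A.fderiv]
  simp [add_comm]

end DerivAlong

section LogPolar

variable {E : Type*} [NormedAddCommGroup E] [NormedSpace ℝ E] {f : ℝ × ℝ → E} {x : ℝ × ℝ}

/-- The Laplacian `∂₁² + ∂₂²` on `ℝ × ℝ`, written with coordinate derivatives because the sup norm
of `ℝ × ℝ` rules out Mathlib's inner-product-space Laplacian. -/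
noncomputable def planeLaplacian (f : ℝ × ℝ → E) (x : ℝ × ℝ) : E :=
  fderiv ℝ (fun y => fderiv ℝ f y (1, 0)) x (1, 0)
    + fderiv ℝ (fun y => fderiv ℝ f y (0, 1)) x (0, 1)

/-- The linear field `(x₁, x₂) ↦ (-x₂, x₁)` generating the rotations of the plane. -/
noncomputable def rotationGenerator : ℝ × ℝ →L[ℝ] ℝ × ℝ :=
  (-ContinuousLinearMap.snd ℝ ℝ ℝ).prod (ContinuousLinearMap.fst ℝ ℝ ℝ)

/-- Logarithmic polar coordinates: the point with radius `exp p.1` and angle `p.2`. -/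
noncomputable def logPolar (p : ℝ × ℝ) : ℝ × ℝ :=
  (Real.exp p.1 * Real.cos p.2, Real.exp p.1 * Real.sin p.2)

theorem continuous_logPolar : Continuous logPolar := by
  unfold logPolar; fun_prop

theorem continuousOn_comp_logPolar {X : Type*} [TopologicalSpace X] {g : ℝ × ℝ → X}
    {U : Set (ℝ × ℝ)} {a b s S : ℝ} (hmaps : MapsTo logPolar (Iio S ×ˢ [[a, b]]) U)
    (hg : ContinuousOn g U) (hs : s < S) : ContinuousOn (fun t => g (logPolar (s, t))) [[a, b]] :=
  hg.comp (f := fun t => logPolar (s, t)) (continuous_logPolar.comp (by fun_prop)).continuousOn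
    fun _ ht => hmaps ⟨hs, ht⟩

theorem hasDerivAt_logPolar_left (s t : ℝ) :
    HasDerivAt (fun σ => logPolar (σ, t)) (logPolar (s, t)) s :=
  ((Real.hasDerivAt_exp s).mul_const (Real.cos t)).prodMk
    ((Real.hasDerivAt_exp s).mul_const (Real.sin t))

theorem hasDerivAt_logPolar_right (s t : ℝ) :
    HasDerivAt (fun τ => logPolar (s, τ)) (rotationGenerator (logPolar (s, t))) t :=
  (((Real.hasDerivAt_cos t).const_mul (Real.exp s)).prodMk
    ((Real.hasDerivAt_sin t).const_mul (Real.exp s))).congr_deriv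
    (by simp [logPolar, rotationGenerator])

theorem sqrt_logPolar (p : ℝ × ℝ) :
    Real.sqrt ((logPolar p).1 ^ 2 + (logPolar p).2 ^ 2) = Real.exp p.1 := by
  have hsq : (logPolar p).1 ^ 2 + (logPolar p).2 ^ 2 = Real.exp p.1 ^ 2 := by
    simp only [logPolar]
    linear_combination Real.exp p.1 ^ 2 * Real.sin_sq_add_cos_sq p.2
  rw [hsq, Real.sqrt_sq (Real.exp_pos _).le]

theorem planeLaplacian_eq (hf : DifferentiableAt ℝ (fderiv ℝ f) x) :
    planeLaplacian f x = fderiv ℝ (fderiv ℝ f) x (1, 0) (1, 0)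
      + fderiv ℝ (fderiv ℝ f) x (0, 1) (0, 1) := by
  simp [planeLaplacian, fderiv_clm_apply hf (differentiableAt_const _)]

theorem derivAlong_id_add_derivAlong_rotationGenerator (hf : DifferentiableAt ℝ (fderiv ℝ f) x) :
    derivAlong (.id ℝ _) (derivAlong (.id ℝ _) f) x
      + derivAlong rotationGenerator (derivAlong rotationGenerator f) x
      = (x.1 ^ 2 + x.2 ^ 2) • planeLaplacian f x := by
  obtain ⟨x₁, x₂⟩ := x
  have hx : ((x₁, x₂) : ℝ × ℝ) = x₁ • ((1 : ℝ), (0 : ℝ)) + x₂ • ((0 : ℝ), (1 : ℝ)) := by simp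
  have hrot : rotationGenerator (x₁, x₂) = -x₂ • ((1 : ℝ), (0 : ℝ)) + x₁ • ((0 : ℝ), (1 : ℝ)) := by
    simp [rotationGenerator]
  have hrot_rot : rotationGenerator (rotationGenerator (x₁, x₂)) = -(x₁, x₂) := by
    simp [rotationGenerator]
  rw [derivAlong_derivAlong hf, derivAlong_derivAlong hf, planeLaplacian_eq hf, hrot_rot, hrot]
  generalize fderiv ℝ (fderiv ℝ f) (x₁, x₂) = H
  simp only [ContinuousLinearMap.id_apply, hx, map_add, map_neg, map_smul, add_apply, smul_apply]
  module

end LogPolar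

section Sector

variable {E : Type*} [NormedAddCommGroup E] [NormedSpace ℝ E] {φ φ' : ℝ → ℝ} {v : ℝ × ℝ → E}
  {U : Set (ℝ × ℝ)} {a b c S s s' : ℝ}

theorem hasDerivAt_integral_smul_comp_logPolar (hU : IsOpen U)
    (hmaps : MapsTo logPolar (Iio S ×ˢ [[a, b]]) U) (hv : ContDiffOn ℝ 1 v U)
    (hφ : ContinuousOn φ [[a, b]]) (hs : s < S) :
    HasDerivAt (fun σ => ∫ t in a..b, φ t • v (logPolar (σ, t)))
      (∫ t in a..b, φ t • derivAlong (.id ℝ _) v (logPolar (s, t))) s := by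
  have hv' : ContinuousOn (derivAlong (.id ℝ _) v) U :=
    (contDiffOn_derivAlong (m := 0) hU hv (by simp) _).continuousOn
  refine hasDerivAt_intervalIntegral_of_continuousOn isOpen_Iio
    (fun σ hσ => hφ.smul (continuousOn_comp_logPolar hmaps hv.continuousOn hσ))
    ((hφ.comp continuousOn_snd fun p hp => hp.2).smul
      (hv'.comp continuous_logPolar.continuousOn hmaps))
    (fun σ hσ t ht => .const_smul (φ t) <| hasDerivAt_comp_of_hasDerivAt_linear
      ((hv.contDiffAt (hU.mem_nhds (hmaps ⟨hσ, ht⟩))).differentiableAt one_ne_zero)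
      (hasDerivAt_logPolar_left σ t)) hs

theorem integral_smul_derivAlong_id_derivAlong_id [CompleteSpace E] (hU : IsOpen U)
    (hmaps : MapsTo logPolar (Iio S ×ˢ [[a, b]]) U) (hv : ContDiffOn ℝ 2 v U)
    (hlap : ∀ x ∈ U, planeLaplacian v x = 0)
    (hva : v (logPolar (s, a)) = 0) (hvb : v (logPolar (s, b)) = 0)
    (hφ : ∀ t ∈ [[a, b]], HasDerivAt φ (φ' t) t)
    (hφ' : ∀ t ∈ [[a, b]], HasDerivAt φ' (-c ^ 2 * φ t) t) (hφa : φ a = 0) (hφb : φ b = 0)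
    (hs : s < S) :
    ∫ t in a..b, φ t • derivAlong (.id ℝ _) (derivAlong (.id ℝ _) v) (logPolar (s, t))
      = c ^ 2 • ∫ t in a..b, φ t • v (logPolar (s, t)) := by
  set J := rotationGenerator
  have hmem (t : ℝ) (ht : t ∈ [[a, b]]) : logPolar (s, t) ∈ U := hmaps ⟨hs, ht⟩
  have hJv : ContDiffOn ℝ 1 (derivAlong J v) U :=
    contDiffOn_derivAlong hU hv one_add_one_eq_two.le J
  have hJJv : ContinuousOn (derivAlong J (derivAlong J v)) U :=
    (contDiffOn_derivAlong (m := 0) hU hJv (by simp) J).continuousOn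
  have hφ_int : IntervalIntegrable (fun t => -c ^ 2 * φ t) volume a b :=
    ((HasDerivAt.continuousOn hφ).const_mul _).intervalIntegrable
  have hderiv {f : ℝ × ℝ → E} (hf : ContDiffOn ℝ 1 f U) (t : ℝ) (ht : t ∈ [[a, b]]) :
      HasDerivAt (fun τ => f (logPolar (s, τ))) (derivAlong J f (logPolar (s, t))) t :=
    hasDerivAt_comp_of_hasDerivAt_linear
      ((hf.contDiffAt (hU.mem_nhds (hmem t ht))).differentiableAt one_ne_zero)
      (hasDerivAt_logPolar_right s t)
  have hlaplace : ∀ t ∈ [[a, b]],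
      derivAlong (.id ℝ _) (derivAlong (.id ℝ _) v) (logPolar (s, t))
        = -derivAlong J (derivAlong J v) (logPolar (s, t)) := by
    intro t ht
    have hx := hmem t ht
    have hv' : DifferentiableAt ℝ (fderiv ℝ v) (logPolar (s, t)) :=
      ((hv.contDiffAt (hU.mem_nhds hx)).fderiv_right one_add_one_eq_two.le).differentiableAt
        one_ne_zero
    rw [eq_neg_iff_add_eq_zero, derivAlong_id_add_derivAlong_rotationGenerator hv', hlap _ hx,
      smul_zero]
  calc ∫ t in a..b, φ t • derivAlong (.id ℝ _) (derivAlong (.id ℝ _) v) (logPolar (s, t))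
      = ∫ t in a..b, -(φ t • derivAlong J (derivAlong J v) (logPolar (s, t))) :=
        intervalIntegral.integral_congr fun t ht => by simp only [hlaplace t ht, smul_neg]
    _ = -∫ t in a..b, (-c ^ 2 * φ t) • v (logPolar (s, t)) := by
        rw [intervalIntegral.integral_neg, integral_smul_deriv_deriv_eq hφ hφ' hφ_int
          (hderiv (hv.of_le one_le_two)) (hderiv hJv)
          (continuousOn_comp_logPolar hmaps hJJv hs).intervalIntegrable
          hφa hφb hva hvb]
    _ = c ^ 2 • ∫ t in a..b, φ t • v (logPolar (s, t)) := by
        simp only [mul_smul, neg_smul, intervalIntegral.integral_neg,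
          intervalIntegral.integral_smul, neg_neg]

theorem integral_smul_comp_logPolar_eq_exp_smul [CompleteSpace E] (hU : IsOpen U)
    (hmaps : MapsTo logPolar (Iio S ×ˢ [[a, b]]) U) (hv : ContDiffOn ℝ 2 v U)
    (hlap : ∀ x ∈ U, planeLaplacian v x = 0)
    (hva : ∀ σ < S, v (logPolar (σ, a)) = 0) (hvb : ∀ σ < S, v (logPolar (σ, b)) = 0)
    (hc : 0 < c) (hφ : ∀ t ∈ [[a, b]], HasDerivAt φ (φ' t) t)
    (hφ' : ∀ t ∈ [[a, b]], HasDerivAt φ' (-c ^ 2 * φ t) t) (hφa : φ a = 0) (hφb : φ b = 0)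
    (hlim : Tendsto (fun σ => Real.exp (c * σ) • ∫ t in a..b, φ t • v (logPolar (σ, t))) atBot
      (𝓝 0)) (hs : s < S) (hs' : s' < S) :
    ∫ t in a..b, φ t • v (logPolar (s, t))
      = Real.exp (c * (s - s')) • ∫ t in a..b, φ t • v (logPolar (s', t)) := by
  have hφ_cont : ContinuousOn φ [[a, b]] := HasDerivAt.continuousOn hφ
  have hEv : ContDiffOn ℝ 1 (derivAlong (.id ℝ _) v) U :=
    contDiffOn_derivAlong hU hv one_add_one_eq_two.le _
  refine eq_exp_smul_of_hasDerivAt_sq_smul_of_tendsto hc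
    (fun σ hσ => hasDerivAt_integral_smul_comp_logPolar hU hmaps (hv.of_le one_le_two) hφ_cont hσ)
    (fun σ hσ => ?_) hlim hs hs'
  exact (hasDerivAt_integral_smul_comp_logPolar hU hmaps hEv hφ_cont hσ).congr_deriv
    (integral_smul_derivAlong_id_derivAlong_id hU hmaps hv hlap (hva σ hσ) (hvb σ hσ) hφ hφ'
      hφa hφb hσ)

end Sector

section HalfDisk

variable {E : Type*} [NormedAddCommGroup E] [NormedSpace ℝ E] {u : ℝ × ℝ → E} {j : ℕ}
  {R r r' s t : ℝ}

/-- The half-disk `{|x| < R, x₁ ≥ 0}` without the origin, for the Euclidean norm `|x|`. -/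
def puncturedHalfDisk (R : ℝ) : Set (ℝ × ℝ) :=
  {x | 0 < Real.sqrt (x.1 ^ 2 + x.2 ^ 2) ∧ Real.sqrt (x.1 ^ 2 + x.2 ^ 2) < R ∧ 0 ≤ x.1}

/-- The `j`-th sine coefficient of `u` on the half-circle of radius `r`, where the angle `π/2 - t`
is measured from the positive `x₂`-axis. -/
noncomputable def halfCircleSineCoeff (j : ℕ) (u : ℝ × ℝ → E) (r : ℝ) : E :=
  ∫ t in (-(Real.pi / 2))..(Real.pi / 2),
    Real.sin (j * (Real.pi / 2 - t)) • u (r * Real.cos t, r * Real.sin t)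

theorem logPolar_mem_puncturedHalfDisk (hs : Real.exp s < R)
    (ht : t ∈ [[-(Real.pi / 2), Real.pi / 2]]) : logPolar (s, t) ∈ puncturedHalfDisk R := by
  rw [uIcc_of_le (neg_le_self Real.pi_div_two_pos.le)] at ht
  refine ⟨?_, ?_, mul_nonneg (Real.exp_pos s).le (Real.cos_nonneg_of_mem_Icc ht)⟩
  · exact sqrt_logPolar (s, t) ▸ Real.exp_pos s
  · exact sqrt_logPolar (s, t) ▸ hs

theorem comp_logPolar_eq_zero_of_cos_eq_zero {X : Type*} [Zero X] {g : ℝ × ℝ → X}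
    (hvan : ∀ x₂ : ℝ, x₂ ≠ 0 → |x₂| < R → g (0, x₂) = 0) (hs : Real.exp s < R)
    (ht : Real.cos t = 0) : g (logPolar (s, t)) = 0 := by
  have hx : logPolar (s, t) = (0, Real.exp s * Real.sin t) := by simp [logPolar, ht]
  have habs : |Real.exp s * Real.sin t| = Real.exp s := by
    simpa [hx, Real.sqrt_sq_eq_abs] using sqrt_logPolar (s, t)
  rw [hx]
  exact hvan _ (abs_pos.1 (habs.symm ▸ Real.exp_pos s)) (habs.trans_lt hs)

theorem halfCircleSineCoeff_congr {v : ℝ × ℝ → E} (huv : EqOn v u (puncturedHalfDisk R))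
    (hr : 0 < r) (hrR : r < R) : halfCircleSineCoeff j v r = halfCircleSineCoeff j u r := by
  refine intervalIntegral.integral_congr fun t ht => ?_
  have hx := huv (logPolar_mem_puncturedHalfDisk (s := Real.log r) (by rwa [Real.exp_log hr]) ht)
  simp only [logPolar, Real.exp_log hr] at hx
  simp only [hx]

theorem norm_halfCircleSineCoeff_le {C : ℝ} (hu : ∀ x ∈ puncturedHalfDisk R, ‖u x‖ ≤ C)
    (hr : 0 < r) (hrR : r < R) : ‖halfCircleSineCoeff j u r‖ ≤ C * Real.pi := by
  have hbound : ∀ t ∈ uIoc (-(Real.pi / 2)) (Real.pi / 2),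
      ‖Real.sin (j * (Real.pi / 2 - t)) • u (r * Real.cos t, r * Real.sin t)‖ ≤ C := by
    intro t ht
    have hx := hu _ (logPolar_mem_puncturedHalfDisk (s := Real.log r)
      (by rwa [Real.exp_log hr]) (uIoc_subset_uIcc ht))
    simp only [logPolar, Real.exp_log hr] at hx
    rw [norm_smul]
    exact (mul_le_of_le_one_left (norm_nonneg _) (Real.abs_sin_le_one _)).trans hx
  simpa [halfCircleSineCoeff, abs_of_pos Real.pi_pos] using
    intervalIntegral.norm_integral_le_of_norm_le_const hbound

theorem hasDerivAt_sin_mul_pi_div_two_sub (c t : ℝ) :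
    HasDerivAt (fun τ => Real.sin (c * (Real.pi / 2 - τ)))
      (-c * Real.cos (c * (Real.pi / 2 - t))) t :=
  (((hasDerivAt_id t).const_sub _).const_mul c).sin.congr_deriv (by simp; ring)

theorem hasDerivAt_neg_mul_cos_mul_pi_div_two_sub (c t : ℝ) :
    HasDerivAt (fun τ => -c * Real.cos (c * (Real.pi / 2 - τ)))
      (-c ^ 2 * Real.sin (c * (Real.pi / 2 - t))) t :=
  ((((hasDerivAt_id t).const_sub _).const_mul c).cos.const_mul (-c)).congr_deriv (by simp; ring)

theorem tendsto_pow_smul_halfCircleSineCoeff (hj : 1 ≤ j) (hR : 0 < R) {C : ℝ}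
    (hu : ∀ x ∈ puncturedHalfDisk R, ‖u x‖ ≤ C) :
    Tendsto (fun r : ℝ => r ^ j • halfCircleSineCoeff j u r) (𝓝[>] 0) (𝓝 0) := by
  have hpow : Tendsto (fun r : ℝ => r ^ j) (𝓝[>] 0) (𝓝 0) :=
    ((continuous_pow j).tendsto' 0 0 (zero_pow (by omega))).mono_left nhdsWithin_le_nhds
  refine hpow.zero_smul_isBoundedUnder_le (isBoundedUnder_of_eventually_le (a := C * Real.pi) ?_)
  filter_upwards [Ioo_mem_nhdsGT hR] with r hr using norm_halfCircleSineCoeff_le hu hr.1 hr.2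

theorem fourier_coeff_pure_power_general [CompleteSpace E] (hj : 1 ≤ j)
    (hvan : ∀ x₂ : ℝ, x₂ ≠ 0 → |x₂| < R → u (0, x₂) = 0)
    (hext : ∃ (U : Set (ℝ × ℝ)) (v : ℝ × ℝ → E), IsOpen U ∧ puncturedHalfDisk R ⊆ U ∧
      ContDiffOn ℝ 2 v U ∧ (∀ x ∈ U, planeLaplacian v x = 0) ∧
      ∀ x ∈ puncturedHalfDisk R, v x = u x)
    (hlim : Tendsto (fun r : ℝ => r ^ j • halfCircleSineCoeff j u r) (𝓝[>] 0) (𝓝 0))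
    (hr : 0 < r) (hrR : r < R) (hr' : 0 < r') (hrR' : r' < R) :
    halfCircleSineCoeff j u r = (r / r') ^ j • halfCircleSineCoeff j u r' := by
  obtain ⟨U, v, hU, hsub, hv, hlap, hvu⟩ := hext
  have hR : 0 < R := hr.trans hrR
  have hexp_lt {s : ℝ} (hs : s < Real.log R) : Real.exp s < R := (Real.lt_log_iff_exp_lt hR).1 hs
  have hmaps : MapsTo logPolar (Iio (Real.log R) ×ˢ [[-(Real.pi / 2), Real.pi / 2]]) U :=
    fun p hp => hsub (logPolar_mem_puncturedHalfDisk (hexp_lt hp.1) hp.2)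
  have hedge {t : ℝ} (ht : t ∈ [[-(Real.pi / 2), Real.pi / 2]]) (hcos : Real.cos t = 0) :
      ∀ s < Real.log R, v (logPolar (s, t)) = 0 := fun s hs =>
    (hvu _ (logPolar_mem_puncturedHalfDisk (hexp_lt hs) ht)).trans
      (comp_logPolar_eq_zero_of_cos_eq_zero hvan (hexp_lt hs) hcos)
  have hlim_v : Tendsto (fun s => Real.exp (j * s) • halfCircleSineCoeff j v (Real.exp s)) atBot
      (𝓝 0) := by
    refine (hlim.comp Real.tendsto_exp_atBot_nhdsGT).congr' ?_
    filter_upwards [eventually_lt_atBot (Real.log R)] with s hs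
    rw [Function.comp_apply, Real.exp_nat_mul,
      halfCircleSineCoeff_congr hvu (Real.exp_pos s) (hexp_lt hs)]
  have hmain := integral_smul_comp_logPolar_eq_exp_smul hU hmaps hv hlap
    (hedge left_mem_uIcc (by simp)) (hedge right_mem_uIcc (by simp)) (Nat.cast_pos.2 hj)
    (fun t _ => hasDerivAt_sin_mul_pi_div_two_sub j t)
    (fun t _ => hasDerivAt_neg_mul_cos_mul_pi_div_two_sub j t)
    (by simp [Real.sin_nat_mul_pi]) (by simp) hlim_v
    (Real.log_lt_log hr hrR) (Real.log_lt_log hr' hrR')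
  simp only [logPolar, Real.exp_log hr, Real.exp_log hr', ← Real.log_div hr.ne' hr'.ne',
    Real.exp_nat_mul, Real.exp_log (div_pos hr hr')] at hmain
  rwa [← halfCircleSineCoeff_congr hvu hr hrR, ← halfCircleSineCoeff_congr hvu hr' hrR']

end HalfDisk

/-- The `j`-th Fourier sine coefficient of a bounded harmonic function on a half-disk
vanishing on the diameter grows exactly like `r^j`: `r ↦ r^{-j} ζ(r)` is constant. -/
theorem fourier_coeff_pure_power (j : ℕ) (hj : 1 ≤ j) (R : ℝ) (hR : 0 < R)
    (u : ℝ × ℝ → ℂ)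
    (hcont : ContinuousOn u {x : ℝ × ℝ | Real.sqrt (x.1 ^ 2 + x.2 ^ 2) < R ∧ 0 ≤ x.1})
    (hbdd : ∃ C : ℝ, ∀ x ∈ {x : ℝ × ℝ | Real.sqrt (x.1 ^ 2 + x.2 ^ 2) < R ∧ 0 ≤ x.1},
      ‖u x‖ ≤ C)
    (hvan : ∀ x₂ : ℝ, |x₂| < R → u (0, x₂) = 0)
    (hext : ∃ (U : Set (ℝ × ℝ)) (v : ℝ × ℝ → ℂ), IsOpen U ∧
      {x : ℝ × ℝ | 0 < Real.sqrt (x.1 ^ 2 + x.2 ^ 2)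
        ∧ Real.sqrt (x.1 ^ 2 + x.2 ^ 2) < R ∧ 0 ≤ x.1} ⊆ U ∧
      ContDiffOn ℝ 2 v U ∧
      (∀ x ∈ U, fderiv ℝ (fun y => fderiv ℝ v y (1, 0)) x (1, 0)
        + fderiv ℝ (fun y => fderiv ℝ v y (0, 1)) x (0, 1) = 0) ∧
      (∀ x ∈ {x : ℝ × ℝ | 0 < Real.sqrt (x.1 ^ 2 + x.2 ^ 2)
        ∧ Real.sqrt (x.1 ^ 2 + x.2 ^ 2) < R ∧ 0 ≤ x.1}, v x = u x))
    (ζ : ℝ → ℂ)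
    (hζ : ∀ r : ℝ, ζ r = ∫ t in (-(Real.pi / 2))..(Real.pi / 2),
        u (r * Real.cos t, r * Real.sin t)
          * (Real.sin ((j : ℝ) * (Real.pi / 2 - t)) : ℂ)) :
    ∀ r r' : ℝ, 0 < r → r < R → 0 < r' → r' < R →
      ζ r = ζ r' * (((r / r') ^ j : ℝ) : ℂ) := by
  obtain ⟨C, hC⟩ := hbdd
  have hlim := tendsto_pow_smul_halfCircleSineCoeff hj hR fun x hx => hC x hx.2
  have hζ_eq (r : ℝ) : ζ r = halfCircleSineCoeff j u r := by
    simp only [hζ, halfCircleSineCoeff, Complex.real_smul, mul_comm]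
  intro r r' hr hrR hr' hrR'
  rw [hζ_eq, hζ_eq, mul_comm, ← Complex.real_smul]
  exact fourier_coeff_pure_power_general hj (fun y _ hy => hvan y hy) hext hlim hr hrR hr' hrR'
end

section
/- Let a = (a₁, a₂) ∈ ℝ² and let A_a(x) = (1/2)(−(x₂ − a₂), x₁ − a₁)/|x − a|². Then for every smooth compactly supported function u : ℝ² → ℂ whose support does not contain a (i.e. u ∈ C_c^∞(ℝ² \ {a}; ℂ)), the Hardy-type inequality ∫_{ℝ²} |i∇u(x) + A_a(x) u(x)|² dx ≥ (1/4) ∫_{ℝ²} |u(x)|² / |x − a|² dx holds, where |·| denotes the Hermitian norm on ℂ². -/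
/-!
On the circle of radius `r` about `a`, the tangential part of `i∇u + A_a u` is
`(i ∂_θ u + α u) / r`, where `α` is the circulation. The operator `i d/dθ + α` on `2π`-periodic
functions has eigenvalues `α - n`, `n ∈ ℤ`, so by Parseval the energy on the circle is at least
`dist(α, ℤ)² ∫ |u|² / r² dθ`. Integrating over `r` in polar coordinates gives the Hardy inequality
with constant `dist(α, ℤ)²`, which is `1/4` for `α = 1/2`.
-/

open MeasureTheory Set Real

section IntervalSpectrum

variable {a b : ℝ}

theorem fourierCoeffOn_add {E : Type*} [NormedAddCommGroup E] [NormedSpace ℂ E] (hab : a < b)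
    {f g : ℝ → E} (hf : IntervalIntegrable f volume a b) (hg : IntervalIntegrable g volume a b)
    (n : ℤ) :
    fourierCoeffOn hab (fun x ↦ f x + g x) n = fourierCoeffOn hab f n + fourierCoeffOn hab g n := by
  have hfourier : ContinuousOn (fun x : ℝ ↦ fourier (-n) (x : AddCircle (b - a))) (uIcc a b) :=
    ((map_continuous (fourier (-n))).comp (AddCircle.continuous_mk' _)).continuousOn
  simp only [fourierCoeffOn_eq_integral, smul_add]
  rw [intervalIntegral.integral_add (hf.continuousOn_smul hfourier)
    (hg.continuousOn_smul hfourier), smul_add]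

theorem fourierCoeffOn_deriv_of_eq_endpoints (hab : a < b) {f f' : ℝ → ℂ}
    (hff' : ∀ x ∈ uIcc a b, HasDerivAt f (f' x) x) (hf' : IntervalIntegrable f' volume a b)
    (hper : f a = f b) (n : ℤ) :
    fourierCoeffOn hab f' n = 2 * π * Complex.I * n / (b - a) * fourierCoeffOn hab f n := by
  rcases eq_or_ne n 0 with rfl | hn
  · rw [fourierCoeffOn_eq_integral]
    simp [intervalIntegral.integral_eq_sub_of_hasDerivAt hff' hf', hper]
  · rw [fourierCoeffOn_of_hasDerivAt hab hn hff' hf', hper]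
    have hπ : (π : ℂ) ≠ 0 := by exact_mod_cast pi_ne_zero
    have hn' : (n : ℂ) ≠ 0 := by exact_mod_cast hn
    have hba : (b - a : ℂ) ≠ 0 := by exact_mod_cast (sub_pos.2 hab).ne'
    field_simp
    ring

theorem mul_integral_sq_le_integral_sq_magnetic_deriv (hab : a < b) {f f' : ℝ → ℂ} {α c : ℝ}
    (hff' : ∀ x ∈ uIcc a b, HasDerivAt f (f' x) x)
    (hf' : MemLp f' 2 (volume.restrict (Ioc a b))) (hper : f a = f b)
    (hc : ∀ n : ℤ, c ≤ (α - 2 * π * n / (b - a)) ^ 2) :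
    c * ∫ x in a..b, ‖f x‖ ^ 2 ≤ ∫ x in a..b, ‖Complex.I * f' x + α * f x‖ ^ 2 := by
  have hf : MemLp f 2 (volume.restrict (Ioc a b)) := by
    have hcont : ContinuousOn f (Icc a b) := uIcc_of_le hab.le ▸
      fun x hx ↦ (hff' x hx).continuousAt.continuousWithinAt
    refine (memLp_two_iff_integrable_sq_norm
      ((hcont.mono Ioc_subset_Icc_self).aestronglyMeasurable measurableSet_Ioc)).2 ?_
    exact (hcont.norm.pow 2).integrableOn_Icc.mono_set Ioc_subset_Icc_self
  have hf_int : IntervalIntegrable f volume a b :=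
    (intervalIntegrable_iff_integrableOn_Ioc_of_le hab.le).2 (hf.integrable one_le_two)
  have hf'_int : IntervalIntegrable f' volume a b :=
    (intervalIntegrable_iff_integrableOn_Ioc_of_le hab.le).2 (hf'.integrable one_le_two)
  have hcoeff (n : ℤ) : fourierCoeffOn hab (fun x ↦ Complex.I * f' x + α * f x) n =
      ((α - 2 * π * n / (b - a) : ℝ) : ℂ) * fourierCoeffOn hab f n := by
    rw [fourierCoeffOn_add hab (hf'_int.const_mul _) (hf_int.const_mul _),
      fourierCoeffOn.const_mul, fourierCoeffOn.const_mul,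
      fourierCoeffOn_deriv_of_eq_endpoints hab hff' hf'_int hper]
    push_cast
    linear_combination (2 * π * n / (b - a) * fourierCoeffOn hab f n) * Complex.I_mul_I
  have hparseval := (hasSum_sq_fourierCoeffOn hab hf).mul_left c
  have hparseval' := hasSum_sq_fourierCoeffOn hab ((hf'.const_mul Complex.I).add (hf.const_mul α))
  have hle := hasSum_le (fun n ↦ ?_) hparseval hparseval'
  · rw [smul_eq_mul, smul_eq_mul, mul_left_comm] at hle
    exact le_of_mul_le_mul_left hle (inv_pos.2 (sub_pos.2 hab))
  · simp only [Pi.add_def, hcoeff, norm_mul, mul_pow, Complex.norm_real, norm_eq_abs, sq_abs]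
    exact mul_le_mul_of_nonneg_right (hc n) (sq_nonneg _)

theorem setLIntegral_Ioo_ofReal_eq_ofReal_intervalIntegral (hab : a ≤ b) {f : ℝ → ℝ}
    (hf : IntervalIntegrable f volume a b) (hf_nonneg : 0 ≤ᵐ[volume.restrict (Ioc a b)] f) :
    ∫⁻ x in Ioo a b, ENNReal.ofReal (f x) = ENNReal.ofReal (∫ x in a..b, f x) := by
  rw [intervalIntegral.integral_of_le hab, ofReal_integral_eq_lintegral_ofReal
    ((intervalIntegrable_iff_integrableOn_Ioc_of_le hab).1 hf) hf_nonneg,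
    setLIntegral_congr Ioo_ae_eq_Ioc]

end IntervalSpectrum

/-- The squared Euclidean distance `|x - y|²`; the metric of `ℝ × ℝ` itself is the sup metric. -/
def euclideanDistSq (x y : ℝ × ℝ) : ℝ :=
  (x.1 - y.1) ^ 2 + (x.2 - y.2) ^ 2

/-- The velocity at `x` of the counterclockwise rotation about `a` with unit angular speed; it is
the direction of the Aharonov–Bohm potential with pole `a`. -/
def rotationField (a x : ℝ × ℝ) : ℝ × ℝ :=
  (-(x.2 - a.2), x.1 - a.1)

/-- The Aharonov–Bohm potential with circulation `α` and pole `a` (with junk value `0` at `a`). -/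
noncomputable def aharonovBohmPotential (α : ℝ) (a x : ℝ × ℝ) : ℝ × ℝ :=
  (α / euclideanDistSq x a) • rotationField a x

/-- The squared Hermitian norm `|(i∇ + A)u|²` of the magnetic gradient of `u`, with `∇u` given by
the values of `fderiv ℝ u` on the standard basis. -/
noncomputable def magneticEnergyDensity (A : ℝ × ℝ → ℝ × ℝ) (u : ℝ × ℝ → ℂ) (x : ℝ × ℝ) : ℝ :=
  ‖Complex.I * fderiv ℝ u x (1, 0) + (A x).1 * u x‖ ^ 2
    + ‖Complex.I * fderiv ℝ u x (0, 1) + (A x).2 * u x‖ ^ 2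

/-- The tangential magnetic derivative `(i ∂_θ + α)u`, where `∂_θ` is the angular derivative about
`a`. -/
noncomputable def angularMagneticDeriv (α : ℝ) (a : ℝ × ℝ) (u : ℝ × ℝ → ℂ) (x : ℝ × ℝ) : ℂ :=
  Complex.I * fderiv ℝ u x (rotationField a x) + α * u x

/-- The point with polar coordinates `(r, θ)` centred at `a`. -/
noncomputable def polarPoint (a : ℝ × ℝ) (r θ : ℝ) : ℝ × ℝ :=
  a + (r * cos θ, r * sin θ)

section Pointwise

variable {a x : ℝ × ℝ}

theorem euclideanDistSq_nonneg (x y : ℝ × ℝ) : 0 ≤ euclideanDistSq x y :=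
  add_nonneg (sq_nonneg _) (sq_nonneg _)

theorem euclideanDistSq_pos (hx : x ≠ a) : 0 < euclideanDistSq x a := by
  have h : x.1 - a.1 ≠ 0 ∨ x.2 - a.2 ≠ 0 := by
    simpa only [sub_ne_zero, ne_eq, ← not_and_or, ← Prod.ext_iff] using hx
  unfold euclideanDistSq
  rcases h with h | h <;> positivity

theorem norm_mul_add_mul_sq_le {R : Type*} [NonUnitalSeminormedRing R] (p q z w : R) :
    ‖p * z + q * w‖ ^ 2 ≤ (‖p‖ ^ 2 + ‖q‖ ^ 2) * (‖z‖ ^ 2 + ‖w‖ ^ 2) :=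
  calc ‖p * z + q * w‖ ^ 2
    _ ≤ (‖p‖ * ‖z‖ + ‖q‖ * ‖w‖) ^ 2 := by
      gcongr
      exact norm_add_le_of_le (norm_mul_le _ _) (norm_mul_le _ _)
    _ ≤ (‖p‖ ^ 2 + ‖q‖ ^ 2) * (‖z‖ ^ 2 + ‖w‖ ^ 2) := by
      linarith [sq_nonneg (‖p‖ * ‖w‖ - ‖q‖ * ‖z‖)]

theorem sq_norm_angularMagneticDeriv_le (α : ℝ) (u : ℝ × ℝ → ℂ) (hx : x ≠ a) :
    ‖angularMagneticDeriv α a u x‖ ^ 2 ≤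
      euclideanDistSq x a * magneticEnergyDensity (aharonovBohmPotential α a) u x := by
  have hdist : ((x.1 - a.1) ^ 2 + (x.2 - a.2) ^ 2 : ℂ) ≠ 0 := by
    exact_mod_cast (euclideanDistSq_pos hx).ne'
  have hderiv : fderiv ℝ u x (rotationField a x) =
      (-(x.2 - a.2) : ℝ) * fderiv ℝ u x (1, 0) + (x.1 - a.1 : ℝ) * fderiv ℝ u x (0, 1) := by
    rw [← Complex.real_smul, ← Complex.real_smul, ← map_smul, ← map_smul, ← map_add]
    simp [rotationField]
  have hprojection : angularMagneticDeriv α a u x =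
      (-(x.2 - a.2) : ℝ) * (Complex.I * fderiv ℝ u x (1, 0)
        + (aharonovBohmPotential α a x).1 * u x)
      + (x.1 - a.1 : ℝ) * (Complex.I * fderiv ℝ u x (0, 1)
        + (aharonovBohmPotential α a x).2 * u x) := by
    rw [angularMagneticDeriv, hderiv]
    simp only [aharonovBohmPotential, rotationField, euclideanDistSq, Prod.smul_mk, smul_eq_mul]
    push_cast
    field_simp
    ring
  have hnorm : ‖((-(x.2 - a.2) : ℝ) : ℂ)‖ ^ 2 + ‖((x.1 - a.1 : ℝ) : ℂ)‖ ^ 2 =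
      euclideanDistSq x a := by
    simp only [Complex.norm_real, norm_eq_abs, sq_abs, neg_sq, euclideanDistSq, add_comm]
  rw [hprojection, ← hnorm]
  exact norm_mul_add_mul_sq_le _ _ _ _

end Pointwise

section Regularity

variable {u : ℝ × ℝ → ℂ}

theorem magneticEnergyDensity_nonneg (A : ℝ × ℝ → ℝ × ℝ) (u : ℝ × ℝ → ℂ) (x : ℝ × ℝ) :
    0 ≤ magneticEnergyDensity A u x := by
  unfold magneticEnergyDensity
  positivity

theorem measurable_sq_norm_div_euclideanDistSq (a : ℝ × ℝ) (hu : Measurable u) :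
    Measurable fun x ↦ ‖u x‖ ^ 2 / euclideanDistSq x a := by
  unfold euclideanDistSq
  fun_prop

theorem measurable_aharonovBohmPotential (α : ℝ) (a : ℝ × ℝ) :
    Measurable (aharonovBohmPotential α a) := by
  unfold aharonovBohmPotential euclideanDistSq rotationField
  fun_prop

theorem continuousOn_aharonovBohmPotential (α : ℝ) (a : ℝ × ℝ) :
    ContinuousOn (aharonovBohmPotential α a) {a}ᶜ := by
  have hdist : ∀ x ∈ ({a}ᶜ : Set (ℝ × ℝ)), (x.1 - a.1) ^ 2 + (x.2 - a.2) ^ 2 ≠ 0 :=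
    fun x hx ↦ (euclideanDistSq_pos hx).ne'
  unfold aharonovBohmPotential euclideanDistSq rotationField
  fun_prop (disch := assumption)

theorem measurable_magneticEnergyDensity {A : ℝ × ℝ → ℝ × ℝ} (hA : Measurable A)
    (hu : Measurable u) : Measurable (magneticEnergyDensity A u) := by
  unfold magneticEnergyDensity
  fun_prop

theorem integrable_magneticEnergyDensity {A : ℝ × ℝ → ℝ × ℝ} (hA : ContinuousOn A (tsupport u))
    (hu : ContDiff ℝ 1 u) (hsupp : HasCompactSupport u) :
    Integrable (magneticEnergyDensity A u) := by
  have hcontinuous : ContinuousOn (magneticEnergyDensity A u) (tsupport u) := by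
    have hu_cont : Continuous u := hu.continuous
    unfold magneticEnergyDensity
    fun_prop
  have hsupport : Function.support (magneticEnergyDensity A u) ⊆ tsupport u := by
    refine Function.support_subset_iff'.2 fun x hx ↦ ?_
    have hu' : fderiv ℝ u x = 0 :=
      image_eq_zero_of_notMem_tsupport fun h ↦ hx (tsupport_fderiv_subset ℝ h)
    simp [magneticEnergyDensity, hu', image_eq_zero_of_notMem_tsupport hx]
  exact (integrableOn_iff_integrable_of_support_subset hsupport).1
    (hcontinuous.integrableOn_compact hsupp)

end Regularity

section PolarCoordinates

variable {r : ℝ}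

theorem euclideanDistSq_polarPoint (a : ℝ × ℝ) (r θ : ℝ) :
    euclideanDistSq (polarPoint a r θ) a = r ^ 2 := by
  simp only [euclideanDistSq, polarPoint, Prod.fst_add, Prod.snd_add, add_sub_cancel_left]
  linear_combination r ^ 2 * sin_sq_add_cos_sq θ

theorem polarPoint_ne (a : ℝ × ℝ) (hr : r ≠ 0) (θ : ℝ) : polarPoint a r θ ≠ a := by
  intro h
  have hradius : r ^ 2 = 0 := by
    simpa [h, euclideanDistSq] using (euclideanDistSq_polarPoint a r θ).symm
  exact hr (sq_eq_zero_iff.1 hradius)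

theorem hasDerivAt_polarPoint (a : ℝ × ℝ) (r θ : ℝ) :
    HasDerivAt (polarPoint a r) (rotationField a (polarPoint a r θ)) θ := by
  have h := ((hasDerivAt_cos θ).const_mul r).prodMk ((hasDerivAt_sin θ).const_mul r)
  have hvelocity : rotationField a (polarPoint a r θ) = (r * -sin θ, r * cos θ) := by
    simp [polarPoint, rotationField]
  rw [hvelocity]
  exact h.const_add a

theorem lintegral_eq_lintegral_polarPoint (a : ℝ × ℝ) {F : ℝ × ℝ → ENNReal} (hF : Measurable F) :
    ∫⁻ x, F x =
      ∫⁻ r in Ioi 0, ENNReal.ofReal r * ∫⁻ θ in Ioo (-π) π, F (polarPoint a r θ) := by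
  have hmeas : Measurable fun p : ℝ × ℝ ↦ ENNReal.ofReal p.1 * F (polarPoint a p.1 p.2) := by
    unfold polarPoint
    fun_prop
  calc ∫⁻ x, F x
    _ = ∫⁻ x, F (a + x) := (lintegral_add_left_eq_self F a).symm
    _ = ∫⁻ p in Ioi 0 ×ˢ Ioo (-π) π, ENNReal.ofReal p.1 * F (polarPoint a p.1 p.2) :=
      (lintegral_comp_polarCoord_symm fun x ↦ F (a + x)).symm
    _ = ∫⁻ r in Ioi 0, ∫⁻ θ in Ioo (-π) π, ENNReal.ofReal r * F (polarPoint a r θ) := by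
      rw [Measure.volume_eq_prod, setLIntegral_prod _ hmeas.aemeasurable]
    _ = ∫⁻ r in Ioi 0, ENNReal.ofReal r * ∫⁻ θ in Ioo (-π) π, F (polarPoint a r θ) := by
      simp only [lintegral_const_mul' _ _ ENNReal.ofReal_ne_top]

end PolarCoordinates

section Hardy

variable {a : ℝ × ℝ} {r : ℝ} {u : ℝ × ℝ → ℂ}

theorem continuous_angular_fderiv_polarPoint (hu : ContDiffOn ℝ 1 u {a}ᶜ) (hr : r ≠ 0) :
    Continuous fun θ ↦ fderiv ℝ u (polarPoint a r θ) (rotationField a (polarPoint a r θ)) := by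
  have hpolar : Continuous (polarPoint a r) :=
    continuous_iff_continuousAt.2 fun θ ↦ (hasDerivAt_polarPoint a r θ).continuousAt
  have hfderiv : Continuous fun θ ↦ fderiv ℝ u (polarPoint a r θ) :=
    (hu.continuousOn_fderiv_of_isOpen isOpen_compl_singleton le_rfl).comp_continuous hpolar
      (polarPoint_ne a hr)
  unfold rotationField
  fun_prop

theorem hasDerivAt_comp_polarPoint (hu : DifferentiableOn ℝ u {a}ᶜ) (hr : r ≠ 0) (θ : ℝ) :
    HasDerivAt (fun θ ↦ u (polarPoint a r θ))
      (fderiv ℝ u (polarPoint a r θ) (rotationField a (polarPoint a r θ))) θ :=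
  (hu.differentiableAt
    (isOpen_compl_singleton.mem_nhds (polarPoint_ne a hr θ))).hasFDerivAt.comp_hasDerivAt θ
      (hasDerivAt_polarPoint a r θ)

theorem mul_integral_circle_sq_le_integral_sq_angularMagneticDeriv (α : ℝ)
    (hu : ContDiffOn ℝ 1 u {a}ᶜ) (hr : r ≠ 0) :
    (α - round α) ^ 2 * ∫ θ in -π..π, ‖u (polarPoint a r θ)‖ ^ 2 ≤
      ∫ θ in -π..π, ‖angularMagneticDeriv α a u (polarPoint a r θ)‖ ^ 2 := by
  have hcont := continuous_angular_fderiv_polarPoint hu hr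
  refine mul_integral_sq_le_integral_sq_magnetic_deriv (neg_lt_self pi_pos)
    (fun θ _ ↦ hasDerivAt_comp_polarPoint (hu.differentiableOn one_ne_zero) hr θ) ?_
    (by simp [polarPoint]) fun n ↦ ?_
  · refine (memLp_two_iff_integrable_sq_norm hcont.aestronglyMeasurable).2 ?_
    exact (hcont.norm.pow 2).integrableOn_Ioc
  · have hfreq : 2 * π * n / (π - -π) = n := by
      field_simp
      ring
    rw [hfreq]
    exact sq_le_sq.2 (round_le α n)

theorem lintegral_circle_hardy_le (α : ℝ) (hu : ContDiffOn ℝ 1 u {a}ᶜ) (hr : r ≠ 0) :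
    ∫⁻ θ in Ioo (-π) π, ENNReal.ofReal ((α - round α) ^ 2 *
        (‖u (polarPoint a r θ)‖ ^ 2 / euclideanDistSq (polarPoint a r θ) a)) ≤
      ∫⁻ θ in Ioo (-π) π, ENNReal.ofReal
        (magneticEnergyDensity (aharonovBohmPotential α a) u (polarPoint a r θ)) := by
  have hπ : -π ≤ π := neg_le_self pi_pos.le
  have hu_circle : Continuous fun θ ↦ u (polarPoint a r θ) := continuous_iff_continuousAt.2
    fun θ ↦ (hasDerivAt_comp_polarPoint (hu.differentiableOn one_ne_zero) hr θ).continuousAt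
  have hu'_circle := continuous_angular_fderiv_polarPoint hu hr
  have hweight_cont : Continuous fun θ ↦
      (α - round α) ^ 2 * (‖u (polarPoint a r θ)‖ ^ 2 / r ^ 2) :=
    ((hu_circle.norm.pow 2).div_const _).const_mul _
  have hdensity_cont : Continuous fun θ ↦
      ‖angularMagneticDeriv α a u (polarPoint a r θ)‖ ^ 2 / r ^ 2 :=
    (((hu'_circle.const_mul _).add (hu_circle.const_mul _)).norm.pow 2).div_const _
  calc
    _ = ENNReal.ofReal ((α - round α) ^ 2 *
        ((∫ θ in -π..π, ‖u (polarPoint a r θ)‖ ^ 2) / r ^ 2)) := by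
      simp only [euclideanDistSq_polarPoint]
      rw [setLIntegral_Ioo_ofReal_eq_ofReal_intervalIntegral hπ
        (hweight_cont.intervalIntegrable _ _) (ae_of_all _ fun θ ↦ by positivity),
        intervalIntegral.integral_const_mul, intervalIntegral.integral_div]
    _ ≤ ENNReal.ofReal
        ((∫ θ in -π..π, ‖angularMagneticDeriv α a u (polarPoint a r θ)‖ ^ 2) / r ^ 2) := by
      rw [← mul_div_assoc]
      gcongr
      exact mul_integral_circle_sq_le_integral_sq_angularMagneticDeriv α hu hr
    _ = ∫⁻ θ in Ioo (-π) π, ENNReal.ofReal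
        (‖angularMagneticDeriv α a u (polarPoint a r θ)‖ ^ 2 / r ^ 2) := by
      rw [← intervalIntegral.integral_div, setLIntegral_Ioo_ofReal_eq_ofReal_intervalIntegral hπ
        (hdensity_cont.intervalIntegrable _ _) (ae_of_all _ fun θ ↦ by positivity)]
    _ ≤ _ := by
      refine lintegral_mono fun θ ↦ ENNReal.ofReal_le_ofReal ?_
      rw [div_le_iff₀' (by positivity), ← euclideanDistSq_polarPoint a r θ]
      exact sq_norm_angularMagneticDeriv_le α u (polarPoint_ne a hr θ)

theorem lintegral_hardy_le (α : ℝ) (hu : ContDiffOn ℝ 1 u {a}ᶜ) :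
    ∫⁻ x, ENNReal.ofReal ((α - round α) ^ 2 * (‖u x‖ ^ 2 / euclideanDistSq x a)) ≤
      ∫⁻ x, ENNReal.ofReal (magneticEnergyDensity (aharonovBohmPotential α a) u x) := by
  have hu_meas : Measurable u := measurable_of_continuousOn_compl_singleton a hu.continuousOn
  have hweight := measurable_sq_norm_div_euclideanDistSq a hu_meas
  have henergy :=
    measurable_magneticEnergyDensity (measurable_aharonovBohmPotential α a) hu_meas
  rw [lintegral_eq_lintegral_polarPoint a (hweight.const_mul _).ennreal_ofReal,
    lintegral_eq_lintegral_polarPoint a henergy.ennreal_ofReal]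
  refine setLIntegral_mono' measurableSet_Ioi fun r hr ↦ ?_
  exact mul_le_mul_right (lintegral_circle_hardy_le α hu (ne_of_gt hr)) _

theorem hardy_aharonov_bohm_general (α : ℝ) (a : ℝ × ℝ) (u : ℝ × ℝ → ℂ)
    (hu : ContDiffOn ℝ 1 u {a}ᶜ)
    (henergy : Integrable (magneticEnergyDensity (aharonovBohmPotential α a) u)) :
    (α - round α) ^ 2 * ∫ x, ‖u x‖ ^ 2 / euclideanDistSq x a ≤
      ∫ x, magneticEnergyDensity (aharonovBohmPotential α a) u x := by
  have hu_meas : Measurable u := measurable_of_continuousOn_compl_singleton a hu.continuousOn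
  have hweight := measurable_sq_norm_div_euclideanDistSq a hu_meas
  rw [← integral_const_mul,
    integral_eq_lintegral_of_nonneg_ae (ae_of_all _ fun x ↦ ?_)
      (hweight.const_mul _).aestronglyMeasurable,
    integral_eq_lintegral_of_nonneg_ae (ae_of_all _ (magneticEnergyDensity_nonneg _ u))
      henergy.aestronglyMeasurable]
  · exact ENNReal.toReal_mono henergy.lintegral_lt_top.ne (lintegral_hardy_le α hu)
  · exact mul_nonneg (sq_nonneg _) (div_nonneg (sq_nonneg _) (euclideanDistSq_nonneg x a))

end Hardy

theorem sq_half_sub_round_half : (1 / 2 - round (1 / 2 : ℝ) : ℝ) ^ 2 = 1 / 4 := by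
  norm_num [round_two_inv]

theorem aharonovBohmPotential_half (a x : ℝ × ℝ) :
    aharonovBohmPotential (1 / 2) a x =
      (-(x.2 - a.2) / (2 * euclideanDistSq x a), (x.1 - a.1) / (2 * euclideanDistSq x a)) := by
  ext <;> simp only [aharonovBohmPotential, rotationField, Prod.smul_mk, smul_eq_mul] <;> ring

/-- Hardy-type inequality for the Aharonov–Bohm potential
`A_a(x) = (1/2)(-(x₂-a₂), x₁-a₁)/|x-a|²` with circulation `1/2`:
for `u ∈ C_c^∞(ℝ² \ {a}; ℂ)`,
`∫ |i∇u + A_a u|² ≥ (1/4) ∫ |u|²/|x-a|²`. -/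
theorem hardy_aharonov_bohm (a : ℝ × ℝ) (u : ℝ × ℝ → ℂ)
    (hsmooth : ContDiff ℝ (⊤ : ℕ∞) u) (hsupp : HasCompactSupport u)
    (ha : a ∉ tsupport u) :
    (∫ x : ℝ × ℝ,
        (‖Complex.I * fderiv ℝ u x (1, 0)
            + ((-(x.2 - a.2) / (2 * ((x.1 - a.1) ^ 2 + (x.2 - a.2) ^ 2)) : ℝ) : ℂ) * u x‖ ^ 2
          + ‖Complex.I * fderiv ℝ u x (0, 1)
            + (((x.1 - a.1) / (2 * ((x.1 - a.1) ^ 2 + (x.2 - a.2) ^ 2)) : ℝ) : ℂ) * u x‖ ^ 2))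
      ≥ (1 / 4) * ∫ x : ℝ × ℝ, ‖u x‖ ^ 2 / ((x.1 - a.1) ^ 2 + (x.2 - a.2) ^ 2) := by
  have hu : ContDiff ℝ 1 u := hsmooth.of_le (mod_cast le_top)
  have hA : ContinuousOn (aharonovBohmPotential (1 / 2) a) (tsupport u) :=
    (continuousOn_aharonovBohmPotential _ a).mono (subset_compl_singleton_iff.2 ha)
  have h := hardy_aharonov_bohm_general (1 / 2) a u hu.contDiffOn
    (integrable_magneticEnergyDensity hA hu hsupp)
  simpa only [sq_half_sub_round_half, magneticEnergyDensity, aharonovBohmPotential_half,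
    euclideanDistSq] using h
end
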